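/- For every μ > -1, the first positive zero j_{μ,1} of the Bessel function J_μ of the first kind satisfies the bounds √((μ+1)(μ+5)) ≤ j_{μ,1} ≤ √(μ+1)(√(μ+2)+1). -/

import Mathlib

open Real

/-- Bessel function of the first kind of order `μ`,
`J_μ(z) = Σ_{k≥0} (-1)^k / (k! Γ(k+μ+1)) (z/2)^{2k+μ}`. -/
noncomputable def besselJ (μ z : ℝ) : ℝ :=
  ∑' k : ℕ, ((-1 : ℝ) ^ k / ((k.factorial : ℝ) * Real.Gamma ((k : ℝ) + μ + 1))) *
    (z / 2) ^ (2 * (k : ℝ) + μ)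

/-- `j` is the smallest positive zero of `f`. -/
def IsFirstPosZero (f : ℝ → ℝ) (j : ℝ) : Prop :=
  0 < j ∧ f j = 0 ∧ ∀ z, 0 < z → z < j → f z ≠ 0


open Filter Topology Set

/-- entire normalisation of the Bessel function. -/
noncomputable def besF (b t : ℝ) : ℝ :=
  ∑' k : ℕ, (-t) ^ k / ((k.factorial : ℝ) * Real.Gamma (b + k))

lemma gamma_add_nat_ge {b : ℝ} (hb : 0 < b) (k : ℕ) :
    Real.Gamma b * b ^ k ≤ Real.Gamma (b + k) := by
  induction k with
  | zero => simp
  | succ k ih =>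
    have h : b + ((k + 1 : ℕ) : ℝ) = (b + k) + 1 := by push_cast; ring
    have hk : (0 : ℝ) ≤ k := Nat.cast_nonneg k
    rw [h, Real.Gamma_add_one (by positivity), pow_succ]
    have h0 : 0 < Real.Gamma b := Real.Gamma_pos_of_pos hb
    have h1 : 0 < Real.Gamma b * b ^ k := by positivity
    nlinarith

lemma besF_term_bound {b : ℝ} (hb : 0 < b) (t : ℝ) (k : ℕ) :
    ‖(-t) ^ k / ((k.factorial : ℝ) * Real.Gamma (b + k))‖ ≤
      (Real.Gamma b)⁻¹ * ((|t| / b) ^ k / k.factorial) := by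
  have h0 : 0 < Real.Gamma b := Real.Gamma_pos_of_pos hb
  have hk : (0 : ℝ) ≤ k := Nat.cast_nonneg k
  have h1 : 0 < Real.Gamma (b + k) := Real.Gamma_pos_of_pos (by positivity)
  have hf : (0 : ℝ) < k.factorial := by positivity
  rw [norm_div, norm_pow, norm_neg, Real.norm_eq_abs, Real.norm_of_nonneg (by positivity)]
  have : (Real.Gamma b)⁻¹ * ((|t| / b) ^ k / k.factorial)
      = |t| ^ k / (k.factorial * (Real.Gamma b * b ^ k)) := by
    rw [div_pow]; field_simp
  rw [this]
  gcongr
  exact gamma_add_nat_ge hb k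

lemma besF_bound_summable (b t : ℝ) :
    Summable (fun k : ℕ => (Real.Gamma b)⁻¹ * ((|t| / b) ^ k / k.factorial)) :=
  (Real.summable_pow_div_factorial _).mul_left _

lemma besF_summable {b : ℝ} (hb : 0 < b) (t : ℝ) :
    Summable (fun k : ℕ => (-t) ^ k / ((k.factorial : ℝ) * Real.Gamma (b + k))) :=
  Summable.of_norm_bounded (besF_bound_summable b t) (besF_term_bound hb t)

lemma besF_zero {b : ℝ} : besF b 0 = (Real.Gamma b)⁻¹ := by
  unfold besF
  rw [tsum_eq_single 0]
  · simp
  · intro k hk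
    simp [hk]

lemma besF_close {b : ℝ} (hb : 0 < b) (t : ℝ) :
    |Real.Gamma b * besF b t - 1| ≤ Real.exp (|t| / b) - 1 := by
  have h0 : 0 < Real.Gamma b := Real.Gamma_pos_of_pos hb
  have hs := besF_summable hb t
  have e1 : Real.Gamma b * besF b t - 1 = Real.Gamma b *
      ∑' k : ℕ, (-t) ^ (k + 1) / (((k + 1).factorial : ℝ) * Real.Gamma (b + (k + 1 : ℕ))) := by
    unfold besF
    rw [hs.tsum_eq_zero_add]
    simp only [pow_zero, Nat.factorial_zero, Nat.cast_one, Nat.cast_zero, add_zero, one_mul]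
    rw [mul_add, mul_one_div_cancel h0.ne']
    ring
  have e2 : Real.exp (|t| / b) - 1 = Real.Gamma b *
      ∑' k : ℕ, (Real.Gamma b)⁻¹ * ((|t| / b) ^ (k + 1) / (k + 1).factorial) := by
    rw [Real.exp_eq_exp_ℝ, NormedSpace.exp_eq_tsum_div]
    beta_reduce
    rw [(Real.summable_pow_div_factorial _).tsum_eq_zero_add, tsum_mul_left]
    field_simp
    simp
  rw [e1, e2, abs_mul, abs_of_pos h0]
  refine mul_le_mul_of_nonneg_left ?_ h0.le
  have hs2 := (summable_nat_add_iff 1).2 (besF_bound_summable b t)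
  exact tsum_of_norm_bounded hs2.hasSum (fun k => besF_term_bound hb t (k + 1))

lemma besF_rec {b : ℝ} (hb : 0 < b) (t : ℝ) :
    t * besF (b + 2) t = b * besF (b + 1) t - besF b t := by
  have s0 := besF_summable hb t
  have s1 := besF_summable (b := b + 1) (by linarith) t
  have s2 := besF_summable (b := b + 2) (by linarith) t
  unfold besF
  rw [← tsum_mul_left, ← tsum_mul_left, ← (s1.mul_left b).tsum_sub s0,
    ((s1.mul_left b).sub s0).tsum_eq_zero_add]
  have hz : b * ((-t) ^ 0 / (((0 : ℕ).factorial : ℝ) * Real.Gamma (b + 1 + (0 : ℕ)))) -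
      (-t) ^ 0 / (((0 : ℕ).factorial : ℝ) * Real.Gamma (b + (0 : ℕ))) = 0 := by
    have h0 : 0 < Real.Gamma b := Real.Gamma_pos_of_pos hb
    simp [Real.Gamma_add_one hb.ne']
    field_simp
    simp
  rw [hz, zero_add]
  refine tsum_congr fun k => ?_
  have hk : (0 : ℝ) ≤ k := Nat.cast_nonneg k
  have h1 : 0 < Real.Gamma (b + k + 1) := Real.Gamma_pos_of_pos (by positivity)
  have g2 : Real.Gamma (b + 2 + k) = (b + k + 1) * Real.Gamma (b + k + 1) := by
    rw [← Real.Gamma_add_one (by positivity)]; congr 1; ring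
  have g2' : Real.Gamma (b + 1 + (k + 1 : ℕ)) = (b + k + 1) * Real.Gamma (b + k + 1) := by
    rw [← Real.Gamma_add_one (by positivity)]; congr 1; push_cast; ring
  have g1 : Real.Gamma (b + (k + 1 : ℕ)) = Real.Gamma (b + k + 1) := by
    congr 1; push_cast; ring
  rw [g2, g2', g1, Nat.factorial_succ, pow_succ]
  have hf : (0 : ℝ) < k.factorial := by positivity
  have hp : 0 < b + k + 1 := by positivity
  push_cast
  field_simp
  ring

lemma besF_hasDerivAt {b : ℝ} (hb : 0 < b) (t : ℝ) :
    HasDerivAt (besF b) (-besF (b + 1) t) t := by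
  have hb1 : 0 < b + 1 := by linarith
  set M := |t| + 1 with hM
  have hM0 : 0 < M := by positivity
  have key : HasDerivAt (fun x => ∑' k : ℕ, (-x) ^ k / ((k.factorial : ℝ) * Real.Gamma (b + k)))
      (∑' k : ℕ, (k * (-t) ^ (k - 1) * (-1)) / ((k.factorial : ℝ) * Real.Gamma (b + k))) t := by
    refine hasDerivAt_tsum_of_isPreconnected
      (u := fun k : ℕ => (k * M ^ (k - 1)) / ((k.factorial : ℝ) * Real.Gamma (b + k)))
      (t := Metric.ball 0 M) (y₀ := 0)
      (g := fun k x => (-x) ^ k / ((k.factorial : ℝ) * Real.Gamma (b + k)))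
      (g' := fun k x => (k * (-x) ^ (k - 1) * (-1)) / ((k.factorial : ℝ) * Real.Gamma (b + k)))
      ?_ Metric.isOpen_ball (convex_ball 0 M).isPreconnected ?_ ?_
      (by simp [hM0]) (besF_summable hb 0) ?_
    · rw [← summable_nat_add_iff 1]
      refine (besF_summable hb1 (-M)).congr fun k => ?_
      have g1 : Real.Gamma (b + (k + 1 : ℕ)) = Real.Gamma (b + 1 + k) := by
        congr 1; push_cast; ring
      have h1 : 0 < Real.Gamma (b + 1 + k) := Real.Gamma_pos_of_pos (by positivity)
      rw [g1, Nat.factorial_succ]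
      push_cast
      have hf : (0 : ℝ) < k.factorial := by positivity
      have hk1 : (0 : ℝ) < k + 1 := by positivity
      simp only [neg_neg]
      field_simp
    · intro k x _
      exact (((hasDerivAt_id x).neg).pow k).div_const _
    · intro k x hx
      have hx' : |x| ≤ M := by
        have := mem_ball_zero_iff.1 hx
        exact this.le
      have h1 : 0 < Real.Gamma (b + k) := Real.Gamma_pos_of_pos (by positivity)
      rw [norm_div, norm_mul, norm_mul, norm_pow, norm_neg, norm_neg, norm_one, mul_one,
        Real.norm_of_nonneg (by positivity : (0 : ℝ) ≤ k),
        Real.norm_of_nonneg (by positivity : (0 : ℝ) ≤ (k.factorial : ℝ) * Real.Gamma (b + k)),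
        Real.norm_eq_abs]
      gcongr
    · rw [mem_ball_zero_iff, Real.norm_eq_abs]; linarith
  have e : (∑' k : ℕ, (k * (-t) ^ (k - 1) * (-1)) / ((k.factorial : ℝ) * Real.Gamma (b + k)))
      = -besF (b + 1) t := by
    have hs := (besF_summable hb1 t).neg
    have hpt : ∀ k : ℕ, (((k + 1 : ℕ) : ℝ) * (-t) ^ (k + 1 - 1) * (-1)) /
        (((k + 1).factorial : ℝ) * Real.Gamma (b + (k + 1 : ℕ)))
        = -((-t) ^ k / ((k.factorial : ℝ) * Real.Gamma (b + 1 + k))) := by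
      intro k
      have g1 : Real.Gamma (b + (k + 1 : ℕ)) = Real.Gamma (b + 1 + k) := by
        congr 1; push_cast; ring
      have h1 : 0 < Real.Gamma (b + 1 + k) := Real.Gamma_pos_of_pos (by positivity)
      rw [g1, Nat.factorial_succ]
      push_cast
      have hf : (0 : ℝ) < k.factorial := by positivity
      have hk1 : (0 : ℝ) < k + 1 := by positivity
      field_simp
    have hs' : Summable (fun k : ℕ =>
        ((k : ℝ) * (-t) ^ (k - 1) * (-1)) / ((k.factorial : ℝ) * Real.Gamma (b + k))) := by
      rw [← summable_nat_add_iff 1]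
      exact hs.congr fun k => (hpt k).symm
    rw [hs'.tsum_eq_zero_add, tsum_congr hpt, tsum_neg]
    simp [besF]
  rw [e] at key
  exact key

lemma besselJ_eq {μ z : ℝ} (hz : 0 < z) :
    besselJ μ z = (z / 2) ^ μ * besF (μ + 1) (z ^ 2 / 4) := by
  unfold besselJ besF
  rw [← tsum_mul_left]
  refine tsum_congr fun k => ?_
  have hz2 : 0 < z / 2 := by positivity
  have h1 : (z / 2) ^ (2 * (k : ℝ) + μ) = (z / 2) ^ μ * (z ^ 2 / 4) ^ k := by
    rw [Real.rpow_add hz2, mul_comm]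
    congr 1
    rw [show (2 * (k : ℝ)) = ((2 * k : ℕ) : ℝ) by push_cast; ring, Real.rpow_natCast, pow_mul]
    congr 1; ring
  rw [h1, neg_pow (z ^ 2 / 4), show (k : ℝ) + μ + 1 = μ + 1 + k by ring]
  ring

/-- Lower bound: positivity before `a (a+4) / 4`. -/
lemma besF_pos {a t : ℝ} (ha : 0 < a) (ht : 0 < t) (hta : t < a * (a + 4) / 4) :
    0 < besF a t := by
  -- a large index
  obtain ⟨N, hN1, hN2⟩ : ∃ N : ℕ, a + 4 ≤ N ∧ Real.exp (t / N) ≤ 5 / 4 := by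
    have h1 : Tendsto (fun n : ℕ => Real.exp (t / n)) atTop (𝓝 1) := by
      have := (Real.continuous_exp.tendsto 0).comp (tendsto_const_div_atTop_nhds_zero_nat t)
      simpa [Function.comp_def] using this
    have h2 := h1.eventually (Iic_mem_nhds (show (1 : ℝ) < 5 / 4 by norm_num))
    obtain ⟨N, h3, h4⟩ := (h2.and (tendsto_natCast_atTop_atTop.eventually_ge_atTop (a + 4))).exists
    exact ⟨N, h4, h3⟩
  set d : ℕ → ℝ := fun n => n * (a + 4) / (2 * (n + 1)) with hd
  have hN0 : (0 : ℝ) < N := by linarith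
  have large : ∀ b : ℝ, (N : ℝ) ≤ b → |Real.Gamma b * besF b t - 1| ≤ 1 / 4 := by
    intro b hb
    have hb0 : 0 < b := by linarith
    refine (besF_close hb0 t).trans ?_
    have : |t| / b ≤ t / N := by rw [abs_of_pos ht]; gcongr
    have := Real.exp_le_exp.2 this
    linarith
  have base : 0 < besF (a + N + 1) t ∧ d N * besF (a + N + 1) t ≤ besF (a + N) t := by
    have l0 := abs_le.1 (large (a + N) (by linarith))
    have l1 := abs_le.1 (large (a + N + 1) (by linarith))
    have hg : 0 < Real.Gamma (a + N) := Real.Gamma_pos_of_pos (by positivity)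
    rw [Real.Gamma_add_one (by positivity)] at l1
    have hp : 0 < besF (a + N + 1) t := by
      by_contra h
      push Not at h
      have : (a + N) * Real.Gamma (a + N) * besF (a + N + 1) t ≤ 0 :=
        mul_nonpos_of_nonneg_of_nonpos (by positivity) h
      linarith [l1.1]
    refine ⟨hp, ?_⟩
    have hdN : d N ≤ (a + N) / 2 := by
      simp only [hd]
      rw [div_le_div_iff₀ (by positivity) (by positivity)]
      nlinarith
    have h3 : (a + N) / 2 * besF (a + N + 1) t ≤ besF (a + N) t := by
      by_contra h
      push Not at h
      have := mul_lt_mul_of_pos_left h hg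
      nlinarith [l1.2, l0.1]
    exact (mul_le_mul_of_nonneg_right hdN hp.le).trans h3
  have step : ∀ n : ℕ, (0 < besF (a + (n + 1 : ℕ) + 1) t ∧
      d (n + 1) * besF (a + (n + 1 : ℕ) + 1) t ≤ besF (a + (n + 1 : ℕ)) t) →
      (0 < besF (a + n + 1) t ∧ d n * besF (a + n + 1) t < besF (a + n) t) := by
    intro n ⟨h1, h2⟩
    have hr := besF_rec (b := a + n) (by positivity) t
    have e1 : a + ((n + 1 : ℕ) : ℝ) + 1 = a + n + 2 := by push_cast; ring
    have e2 : a + ((n + 1 : ℕ) : ℝ) = a + n + 1 := by push_cast; ring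
    rw [e1] at h1 h2
    rw [e2] at h2
    have hdp : 0 < d (n + 1) := by simp only [hd]; positivity
    have hp : 0 < besF (a + n + 1) t := lt_of_lt_of_le (by positivity) h2
    refine ⟨hp, ?_⟩
    have hineq : t < (a + n - d n) * d (n + 1) := by
      refine lt_of_lt_of_le hta ?_
      have : (a + n - d n) * d (n + 1) - a * (a + 4) / 4
          = (a + 4) * (n * (2 * n - 2)) / (4 * (n + 2)) := by
        simp only [hd]; push_cast; field_simp; ring
      have h5 : 0 ≤ (a + 4) * ((n : ℝ) * (2 * n - 2)) / (4 * (n + 2)) := by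
        rcases Nat.eq_zero_or_pos n with h | h
        · simp [h]
        · have : (1 : ℝ) ≤ n := by exact_mod_cast h
          have : (0 : ℝ) ≤ 2 * n - 2 := by linarith
          positivity
      linarith
    have hx : 0 < a + n - d n := by
      by_contra h
      push Not at h
      have := mul_nonpos_of_nonpos_of_nonneg h hdp.le
      linarith
    have := mul_lt_mul_of_pos_right hineq h1
    have := mul_le_mul_of_nonneg_left h2 hx.le
    nlinarith
  have all : ∀ m : ℕ, m ≤ N → (0 < besF (a + (N - m : ℕ) + 1) t ∧
      d (N - m) * besF (a + (N - m : ℕ) + 1) t ≤ besF (a + (N - m : ℕ)) t) := by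
    intro m
    induction m with
    | zero => intro _; simpa using base
    | succ m ih =>
      intro hm
      have := ih (by omega)
      rw [show N - m = (N - (m + 1)) + 1 by omega] at this
      obtain ⟨h1, h2⟩ := step _ this
      exact ⟨h1, h2.le⟩
  have hNpos : 1 ≤ N := by exact_mod_cast Nat.pos_of_ne_zero (by rintro rfl; simp at hN0)
  have h1 := all (N - 1) (by omega)
  rw [show N - (N - 1) = 0 + 1 by omega] at h1
  have h2 := (step 0 h1).2
  simpa [hd] using h2

/-- Riccati / Rayleigh–Ritz argument. -/
lemma riccati_bound {a s R c : ℝ} (ha : 0 < a) (hs : 0 < s) (hsa : s ≠ a - 1) (hR : 0 < R)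
    (r : ℝ → ℝ) (hr : ∀ t ∈ Ioc 0 R, HasDerivAt r ((1 - a * r t) / t + r t ^ 2) t)
    (hr0 : Tendsto r (𝓝[>] 0) (𝓝 c)) :
    R ≤ a * (s + 1 + a) * (s + 1) / (4 * s) := by
  obtain ⟨q, hq⟩ : ∃ q, q = (s + 1 - a) / 2 := ⟨_, rfl⟩
  have hq0 : q ≠ 0 := by
    intro h; apply hsa; linarith
  have hs' : s = a + 2 * q - 1 := by linarith
  have h2q : 0 < a + 2 * q := by linarith
  have h1q : 0 < a + q := by linarith
  set C := R ^ q with hC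
  set H : ℝ → ℝ := fun t => (C ^ 2 * t ^ a - 2 * C * t ^ (a + q) + t ^ (a + 2 * q)) * r t
    - (C ^ 2 * t ^ a / a - 2 * C * t ^ (a + q) / (a + q) + t ^ (a + 2 * q) / (a + 2 * q))
    + q ^ 2 * t ^ s / s with hH
  have hpow : ∀ e : ℝ, 0 < e → Tendsto (fun t : ℝ => t ^ e) (𝓝[>] 0) (𝓝 0) := by
    intro e he
    have := (Real.continuousAt_rpow_const 0 e (Or.inr he.le)).tendsto
    rw [Real.zero_rpow he.ne'] at this
    exact this.mono_left nhdsWithin_le_nhds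
  have hlim : Tendsto H (𝓝[>] 0) (𝓝 0) := by
    have p0 := hpow a ha
    have p1 := hpow _ h1q
    have p2 := hpow _ h2q
    have p3 := hpow _ hs
    have := (((((p0.const_mul (C ^ 2)).sub (p1.const_mul (2 * C))).add p2).mul hr0).sub
      ((((p0.const_mul (C ^ 2)).div_const a).sub ((p1.const_mul (2 * C)).div_const (a + q))).add
        (p2.div_const (a + 2 * q)))).add ((p3.const_mul (q ^ 2)).div_const s)
    simpa [hH] using this
  have hder : ∀ t ∈ Ioc 0 R, ∃ D, 0 ≤ D ∧ HasDerivAt H D t := by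
    intro t ht
    have ht0 : 0 < t := ht.1
    have hp : ∀ e : ℝ, HasDerivAt (fun t : ℝ => t ^ e) (e * t ^ (e - 1)) t := fun e =>
      Real.hasDerivAt_rpow_const (Or.inl ht0.ne')
    have hD := ((((((hp a).const_mul (C ^ 2)).sub ((hp (a + q)).const_mul (2 * C))).add
      (hp (a + 2 * q))).mul (hr t ht)).sub
      (((((hp a).const_mul (C ^ 2)).div_const a).sub
        (((hp (a + q)).const_mul (2 * C)).div_const (a + q))).add
        ((hp (a + 2 * q)).div_const (a + 2 * q)))).add (((hp s).const_mul (q ^ 2)).div_const s)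
    refine ⟨_, ?_, hD⟩
    have x0 : t ^ (a - 1) = t ^ a / t := by rw [Real.rpow_sub_one ht0.ne']
    have x1 : t ^ (a + q - 1) = t ^ a * t ^ q / t := by
      rw [Real.rpow_sub_one ht0.ne', Real.rpow_add ht0]
    have y2 : t ^ (a + 2 * q) = t ^ a * (t ^ q) ^ 2 := by
      rw [Real.rpow_add ht0, mul_comm 2 q, Real.rpow_mul ht0.le]
      norm_cast
    have x2 : t ^ (a + 2 * q - 1) = t ^ a * (t ^ q) ^ 2 / t := by
      rw [Real.rpow_sub_one ht0.ne', y2]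
    have x3 : t ^ (s - 1) = t ^ a * (t ^ q) ^ 2 / t / t := by
      rw [Real.rpow_sub_one ht0.ne', hs', x2]
    have y1 : t ^ (a + q) = t ^ a * t ^ q := by rw [Real.rpow_add ht0]
    simp only [Pi.add_apply, Pi.sub_apply]
    rw [x0, x1, x2, x3, y1, y2]
    have hA : 0 < t ^ a := by positivity
    have : 0 ≤ t ^ a * (((C - t ^ q) * r t) * t - q * t ^ q) ^ 2 / t ^ 2 := by positivity
    refine this.trans_eq ?_
    have hne := h2q.ne'
    rw [mul_div_cancel_left₀ (t ^ a * (t ^ q) ^ 2 / t) hne]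
    field_simp
    ring
  have hmono : MonotoneOn H (Ioc 0 R) := by
    refine monotoneOn_of_deriv_nonneg (convex_Ioc 0 R) ?_ ?_ ?_
    · intro t ht
      obtain ⟨D, _, hD⟩ := hder t ht
      exact hD.continuousAt.continuousWithinAt
    · intro t ht
      obtain ⟨D, _, hD⟩ := hder t (interior_subset ht)
      exact hD.differentiableAt.differentiableWithinAt
    · intro t ht
      obtain ⟨D, hD0, hD⟩ := hder t (interior_subset ht)
      rw [hD.deriv]; exact hD0
  have hHR : 0 ≤ H R := by
    refine le_of_tendsto hlim ?_
    filter_upwards [Ioc_mem_nhdsGT hR] with t ht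
    exact hmono ht ⟨hR, le_rfl⟩ ht.2
  have y1 : R ^ (a + q) = R ^ a * C := by rw [Real.rpow_add hR]
  have y2 : R ^ (a + 2 * q) = R ^ a * C ^ 2 := by
    rw [Real.rpow_add hR, mul_comm 2 q, Real.rpow_mul hR.le]
    norm_cast
  have y3 : R ^ s = R ^ a * C ^ 2 / R := by
    rw [hs', Real.rpow_sub_one hR.ne', y2]
  have hCp : 0 < C := by positivity
  have hA : 0 < R ^ a := by positivity
  have hEq : H R = R ^ a * C ^ 2 * q ^ 2 / (R * s) * (1 - R * (2 * s) / (a * (a + q) * (a + 2 * q))) := by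
    simp only [hH]
    rw [y1, y2, y3]
    field_simp
    ring
  rw [hEq] at hHR
  have hK : 0 < R ^ a * C ^ 2 * q ^ 2 / (R * s) := by positivity
  have h3 := nonneg_of_mul_nonneg_right hHR hK
  have h4 : R * (2 * s) ≤ a * (a + q) * (a + 2 * q) := by
    rw [sub_nonneg, div_le_one (by positivity)] at h3
    exact h3
  rw [le_div_iff₀ (by positivity)]
  have e1 : a + q = (s + 1 + a) / 2 := by linarith
  have e2 : a + 2 * q = s + 1 := by linarith
  rw [e1, e2] at h4
  nlinarith

lemma besF_riccati {a s R : ℝ} (ha : 0 < a) (hs : 0 < s) (hsa : s ≠ a - 1) (hR : 0 < R)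
    (hpos : ∀ t ∈ Ioc 0 R, besF a t ≠ 0) :
    R ≤ a * (s + 1 + a) * (s + 1) / (4 * s) := by
  have hg : 0 < Real.Gamma a := Real.Gamma_pos_of_pos ha
  have ha1 : 0 < a + 1 := by linarith
  refine riccati_bound (c := besF (a + 1) 0 / besF a 0) ha hs hsa hR
    (fun t => besF (a + 1) t / besF a t) ?_ ?_
  · intro t ht
    have hne := hpos t ht
    have ht0 : t ≠ 0 := ht.1.ne'
    have h := (besF_hasDerivAt ha1 t).div (besF_hasDerivAt ha t) hne
    refine h.congr_deriv ?_
    have hr := besF_rec ha t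
    rw [show a + 1 + 1 = a + 2 by ring]
    have : besF (a + 2) t = (a * besF (a + 1) t - besF a t) / t := by
      rw [← hr]; field_simp
    rw [this]
    field_simp
    ring
  · have h0 : besF a 0 ≠ 0 := by rw [besF_zero]; positivity
    exact (((besF_hasDerivAt ha1 0).continuousAt.div (besF_hasDerivAt ha 0).continuousAt h0).tendsto).mono_left
      nhdsWithin_le_nhds

theorem first_bessel_zero_bounds (μ j : ℝ) (hμ : -1 < μ)
    (hj : IsFirstPosZero (besselJ μ) j) :
    Real.sqrt ((μ + 1) * (μ + 5)) ≤ j ∧ j ≤ Real.sqrt (μ + 1) * (Real.sqrt (μ + 2) + 1) := by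
  obtain ⟨hj0, hjz, hjf⟩ := hj
  have ha : 0 < μ + 1 := by linarith
  obtain ⟨a, haa⟩ : ∃ a, a = μ + 1 := ⟨_, rfl⟩
  rw [show μ + 5 = a + 4 by linarith, show μ + 2 = a + 1 by linarith, ← haa]
  rw [← haa] at ha
  constructor
  · rw [Real.sqrt_le_left hj0.le]
    by_contra h
    push Not at h
    have hp := besF_pos (t := j ^ 2 / 4) ha (by positivity) (by linarith)
    rw [besselJ_eq hj0, ← haa] at hjz
    have : 0 < (j / 2) ^ μ := by positivity
    have := mul_pos this hp
    linarith
  · have main : ∀ s : ℝ, 0 < s → s ≠ a - 1 → j ^ 2 ≤ a * (s + 1 + a) * (s + 1) / s := by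
      intro s hs hsa
      have : j ^ 2 / 4 ≤ a * (s + 1 + a) * (s + 1) / (4 * s) := by
        refine le_of_forall_lt_imp_le_of_dense fun R hR => ?_
        by_cases hR0 : 0 < R
        · refine besF_riccati ha hs hsa hR0 fun t ht h0 => ?_
          have ht0 : 0 < t := ht.1
          have hz : 0 < 2 * √t := by positivity
          have hsq : (2 * √t) ^ 2 = 4 * t := by rw [mul_pow, Real.sq_sqrt ht0.le]; ring
          refine hjf (2 * √t) hz ?_ ?_
          · refine lt_of_pow_lt_pow_left₀ 2 hj0.le ?_
            rw [hsq]; linarith [ht.2]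
          · rw [besselJ_eq hz, hsq, ← haa, show 4 * t / 4 = t by ring, h0, mul_zero]
        · push Not at hR0
          exact hR0.trans (by positivity)
      have e : a * (s + 1 + a) * (s + 1) / (4 * s) = a * (s + 1 + a) * (s + 1) / s / 4 := by
        field_simp
      rw [e] at this
      linarith
    have hs0 : 0 < √(a + 1) := Real.sqrt_pos.2 (by linarith)
    have hfin : j ^ 2 ≤ a * (√(a + 1) + 1 + a) * (√(a + 1) + 1) / √(a + 1) := by
      by_cases hc : √(a + 1) = a - 1
      · have hcont : ContinuousAt (fun s : ℝ => a * (s + 1 + a) * (s + 1) / s) (√(a + 1)) := by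
          refine ContinuousAt.div (by fun_prop) continuousAt_id hs0.ne'
        have ht : Tendsto (fun s : ℝ => a * (s + 1 + a) * (s + 1) / s) (𝓝[≠] √(a + 1)) _ :=
          hcont.tendsto.mono_left nhdsWithin_le_nhds
        refine ge_of_tendsto ht ?_
        filter_upwards [self_mem_nhdsWithin, nhdsWithin_le_nhds (lt_mem_nhds hs0)] with s h1 h2
        exact main s h2 (fun h => h1 (h.trans hc.symm))
      · exact main _ hs0 hc
    refine (pow_le_pow_iff_left₀ hj0.le (by positivity) two_ne_zero).1 ?_
    rw [mul_pow, Real.sq_sqrt ha.le]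
    refine hfin.trans_eq ?_
    have hsq : √(a + 1) ^ 2 = a + 1 := Real.sq_sqrt (by linarith)
    have e : a = √(a + 1) ^ 2 - 1 := by linarith
    set S := √(a + 1)
    rw [e]
    field_simp
    ring
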